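/- Let G be the parallel composition of r > 2 paths of lengths k_1,...,k_r, where k_1 is odd and k_2,...,k_r are all even, and let X be the projective toric subset parameterized by G. Then reg(G) = (k_1 + k_2/2 + ... + k_r/2 − 1)(q−2). -/

import Mathlib

open MvPolynomial

/-- A finite multigraph without loops: each edge `e` has two distinct endpoints
`fst e` and `snd e`.  Multiple edges with the same endpoints are allowed. -/
structure Multigraph (V E : Type) : Type where
  fst : E → V
  snd : E → V
  ne : ∀ e, fst e ≠ snd e

namespace Multigraph

variable {V E : Type}

/-- Vertex `v` is an endpoint of the edge `e`. -/
def Incident (G : Multigraph V E) (v : V) (e : E) : Prop :=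
  G.fst e = v ∨ G.snd e = v

instance (G : Multigraph V E) [DecidableEq V] (v : V) : DecidablePred (G.Incident v) :=
  fun e => inferInstanceAs (Decidable (G.fst e = v ∨ G.snd e = v))

/-- The degree of a vertex: the number of edges incident to it. -/
noncomputable def degree (G : Multigraph V E) (v : V) : ℕ :=
  Nat.card {e : E // G.Incident v e}

/-- The graph has no isolated vertices. -/
def NoIsolated (G : Multigraph V E) : Prop :=
  ∀ v : V, ∃ e : E, G.Incident v e

variable (K : Type) [Field K] [Fintype K]

/-- The point of the affine torus associated with an assignment `x` of nonzero
scalars to the vertices: its coordinate at an edge `e = {v,w}` is `x v * x w`. -/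
def point (G : Multigraph V E) (x : V → Kˣ) : E → K :=
  fun e => (x (G.fst e) : K) * (x (G.snd e) : K)

/-- The projective toric subset `X` parameterized by `G`, realized as the set of
`Kˣ`-orbits (i.e. projective points) of the points `G.point K x`, `x : V → Kˣ`. -/
def toricSet (G : Multigraph V E) : Set (Set (E → K)) :=
  Set.range fun x : V → Kˣ => MulAction.orbit Kˣ (G.point K x)

/-- The vanishing ideal `I(X)` of the projective toric subset parameterized by `G`:
the ideal of all polynomials each of whose homogeneous components vanishes at the
point `G.point K x` for every `x : V → Kˣ`. -/
def vanishingIdeal (G : Multigraph V E) : Ideal (MvPolynomial E K) where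
  carrier := {f | ∀ (x : V → Kˣ) (d : ℕ), eval (G.point K x) (homogeneousComponent d f) = 0}
  zero_mem' := by intro x d; simp
  add_mem' := by
    intro a b ha hb x d
    rw [map_add, map_add, ha x d, hb x d, add_zero]
  smul_mem' := by
    intro c f hf x n
    rw [smul_eq_mul, ← sum_homogeneousComponent f, Finset.mul_sum, map_sum, map_sum]
    refine Finset.sum_eq_zero fun d _ => ?_
    nth_rewrite 1 [← sum_homogeneousComponent c]
    rw [Finset.sum_mul, map_sum, map_sum]
    refine Finset.sum_eq_zero fun e _ => ?_
    have h1 : (homogeneousComponent e c * homogeneousComponent d f).IsHomogeneous (e + d) :=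
      (homogeneousComponent_isHomogeneous e c).mul (homogeneousComponent_isHomogeneous d f)
    rw [homogeneousComponent_of_mem ((mem_homogeneousSubmodule _ _).mpr h1)]
    split_ifs
    · rw [map_mul, hf x d, mul_zero]
    · simp

/-- The Hilbert function of `S/I(X)`: the dimension over `K` of the degree-`d`
homogeneous component of the quotient, realized as the image of the space of
degree-`d` homogeneous polynomials in the quotient. -/
noncomputable def hilbert (G : Multigraph V E) (d : ℕ) : ℕ :=
  Module.finrank K
    ((homogeneousSubmodule E K d).map (Ideal.Quotient.mkₐ K (G.vanishingIdeal K)).toLinearMap)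

/-- The regularity `reg G`: the least `d` such that the Hilbert function of `S/I(X)`
at `d` equals the number of points of `X`. -/
noncomputable def reg (G : Multigraph V E) : ℕ :=
  sInf {d : ℕ | G.hilbert K d = (G.toricSet K).ncard}

/-- The graph obtained from `G` by deleting a vertex `v` and all edges incident
to it. -/
def deleteVert (G : Multigraph V E) (v : V) :
    Multigraph {w : V // w ≠ v} {e : E // ¬ G.Incident v e} where
  fst e := ⟨G.fst e.1, fun h => e.2 (Or.inl h)⟩
  snd e := ⟨G.snd e.1, fun h => e.2 (Or.inr h)⟩
  ne e h := G.ne e.1 (congrArg Subtype.val h)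

/-- The graph obtained from `G` by identifying the vertex `v₂` with the vertex `v₁`:
the edges are the same, and every endpoint equal to `v₂` is replaced by `v₁`.
This requires that `{v₁, v₂}` is a non-edge of `G`, so that no loops are created. -/
def identifyVert [DecidableEq V] (G : Multigraph V E) (v₁ v₂ : V) (h12 : v₁ ≠ v₂)
    (h : ∀ e, ¬ (G.Incident v₁ e ∧ G.Incident v₂ e)) :
    Multigraph {w : V // w ≠ v₂} E where
  fst e := ⟨if G.fst e = v₂ then v₁ else G.fst e, by split_ifs with hh; exacts [h12, hh]⟩
  snd e := ⟨if G.snd e = v₂ then v₁ else G.snd e, by split_ifs with hh; exacts [h12, hh]⟩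
  ne := by
    intro e heq
    rw [Subtype.ext_iff] at heq
    simp only at heq
    split_ifs at heq with h1 h2 h2
    · exact G.ne e (h1.trans h2.symm)
    · exact h e ⟨Or.inr heq.symm, Or.inl h1⟩
    · exact h e ⟨Or.inl heq, Or.inr h2⟩
    · exact G.ne e heq

/-- The subgraph of `G` determined by a set `A` of edges of `G`, together with all
endpoints of those edges (so it has no isolated vertices). -/
def subgraph [DecidableEq V] (G : Multigraph V E) (A : Finset E) :
    Multigraph {v : V // ∃ e ∈ A, G.Incident v e} {e : E // e ∈ A} where
  fst e := ⟨G.fst e.1, e.1, e.2, Or.inl rfl⟩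
  snd e := ⟨G.snd e.1, e.1, e.2, Or.inr rfl⟩
  ne e h := G.ne e.1 (congrArg Subtype.val h)

end Multigraph

/-- The vertex of the parallel composition of paths of lengths `k i` lying on the
`i`-th path at distance `j` from the common initial vertex:  `j = 0` gives the common
initial vertex, `j = k i` the common terminal vertex, and `0 < j < k i` gives the
`j`-th interior vertex of the `i`-th path. -/
def pcVert {ι : Type} (k : ι → ℕ) (i : ι) (j : ℕ) :
    Bool ⊕ ((i : ι) × Fin (k i - 1)) :=
  if h0 : j = 0 then Sum.inl false
  else if h : j < k i then Sum.inr ⟨i, ⟨j - 1, by omega⟩⟩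
  else Sum.inl true

/-- The parallel composition of the family of paths `P i` of lengths `k i` (`i : ι`):
the `i`-th path has `k i` edges indexed by `Fin (k i)`, its `j`-th edge joining the
vertices of the `i`-th path at distances `j` and `j + 1` from the common initial
vertex.  All the initial vertices of the paths are identified to a single vertex and
all the terminal vertices are identified to a single vertex. -/
def parallelComp {ι : Type} (k : ι → ℕ) :
    Multigraph (Bool ⊕ ((i : ι) × Fin (k i - 1))) ((i : ι) × Fin (k i)) where
  fst e := pcVert k e.1 e.2.1
  snd e := pcVert k e.1 (e.2.1 + 1)
  ne := by
    rintro ⟨i, j⟩ h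
    have hj := j.2
    simp only [pcVert] at h
    split_ifs at h <;> simp_all <;> omega

/-- The monomial `f i`: the product of the edges of the `i`-th path of the parallel
composition in odd positions (positions `1, 3, 5, ...`, i.e. indices `0, 2, 4, ...`). -/
noncomputable def oddProd {ι : Type} (K : Type) [Field K] (k : ι → ℕ) (i : ι) :
    MvPolynomial ((i : ι) × Fin (k i)) K :=
  ∏ m : Fin ((k i + 1) / 2), X ⟨i, ⟨2 * m.1, by have := m.2; omega⟩⟩

/-- The monomial `g i`: the product of the edges of the `i`-th path of the parallel
composition in even positions (positions `2, 4, 6, ...`, i.e. indices `1, 3, 5, ...`). -/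
noncomputable def evenProd {ι : Type} (K : Type) [Field K] (k : ι → ℕ) (i : ι) :
    MvPolynomial ((i : ι) × Fin (k i)) K :=
  ∏ m : Fin (k i / 2), X ⟨i, ⟨2 * m.1 + 1, by have := m.2; omega⟩⟩

/-!
Put `N = q - 1`. On the torus, a monomial in the edges is a character of `(Kˣ)^V`, given by its
vertex sums modulo `N`. Distinct characters are linearly independent, so the Hilbert function in
degree `d` counts the vertex labellings modulo `N` induced by edge labellings of total `d`. All of
them have total `2 * d`, and since `G` is not bipartite there are exactly `|X|` labellings with that
total. The regularity is thus the least `d` for which all of these are induced.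

An edge labelling of `G` modulo `N` with prescribed vertex sums is determined by the first labels on
the paths. The total `d` fixes the first label on the odd path. On an even path, the residues in
`[0, N)` average `(N - 1) / 2` per edge as the first label varies; averaging over the first labels
of two even paths, moved in opposite directions, gives a labelling of total at most `d`. Minimality
comes from prescribing `-2` at the interior vertices of the odd path and `-1` at those of the even
paths: one below the claimed degree, every label on the odd path is then forced to be `-1`, and the
total exceeds the degree.
-/

section ModularArithmetic

theorem sub_one_le_of_natCast_eq_neg_one {N n : ℕ} (h : (n : ZMod N) = -1) : N - 1 ≤ n := by
  have hdvd : N ∣ n + 1 := by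
    rw [← ZMod.natCast_eq_zero_iff, Nat.cast_add, h, Nat.cast_one, neg_add_cancel]
  have := Nat.le_of_dvd n.succ_pos hdvd
  omega

variable (N : ℕ) [NeZero N]

theorem natCast_sub_one_eq_neg_one : ((N - 1 : ℕ) : ZMod N) = -1 := by
  rw [Nat.cast_sub NeZero.one_le, ZMod.natCast_self, Nat.cast_one, zero_sub]

theorem sum_zmod_val_mul_two : (∑ x : ZMod N, x.val) * 2 = N * (N - 1) := by
  obtain ⟨n, rfl⟩ := Nat.exists_eq_succ_of_ne_zero (NeZero.ne N)
  exact (congrArg (· * 2) (Fin.sum_univ_eq_sum_range (fun i => i) (n + 1))).trans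
    (Finset.sum_range_id_mul_two (n + 1))

variable {N}

theorem exists_natCast_eq_and_sum_eq {E : Type*} [Fintype E] [Nonempty E] (b : E → ZMod N)
    {d : ℕ} (hd : ∑ e, b e = d) (hle : ∑ e, (b e).val ≤ d) :
    ∃ a : E → ℕ, ∑ e, a e = d ∧ ∀ e, (a e : ZMod N) = b e := by
  classical
  obtain ⟨e₀⟩ := ‹Nonempty E›
  have hgap : ((d - ∑ e, (b e).val : ℕ) : ZMod N) = 0 := by
    simp [Nat.cast_sub hle, hd]
  refine ⟨fun e => (b e).val + if e = e₀ then d - ∑ e, (b e).val else 0, ?_, fun e => ?_⟩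
  · simp [Finset.sum_add_distrib, hle]
  · by_cases he : e = e₀ <;> simp [he, hgap]

end ModularArithmetic

section Averaging

variable {ι A M : Type*} [Fintype A] [AddCommMonoid M] [LinearOrder M]
  [IsOrderedCancelAddMonoid M]

theorem exists_le_of_sum_le_card_nsmul [Nonempty A] {f : A → M} {B : M}
    (h : ∑ x, f x ≤ Fintype.card A • B) :
    ∃ x, f x ≤ B := by
  obtain ⟨x, -, hx⟩ := Finset.exists_le_of_sum_le (g := fun _ => B) Finset.univ_nonempty
    (by simpa using h)
  exact ⟨x, hx⟩

/-- Start from arguments at which each `F i` is individually small, and average over the tuples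
obtained by moving two coordinates `i₁`, `i₂` in opposite directions. -/
theorem exists_sum_eq_and_sum_apply_le [AddCommGroup A] {s : Finset ι} (hs : s.Nontrivial)
    (F : ι → A → M) (B : ι → M) (hF : ∀ i ∈ s, ∑ x, F i x ≤ Fintype.card A • B i) (g : A) :
    ∃ y : ι → A, ∑ i ∈ s, y i = g ∧ ∑ i ∈ s, F i (y i) ≤ ∑ i ∈ s, B i := by
  classical
  obtain ⟨i₁, h₁, i₂, h₂, hne⟩ := hs
  rw [Finset.mem_coe] at h₁ h₂
  have hmin (i : ι) : ∃ x, i ∈ s → F i x ≤ B i := by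
    by_cases hi : i ∈ s
    · exact (exists_le_of_sum_le_card_nsmul (hF i hi)).imp fun _ h _ => h
    · exact ⟨0, fun h => (hi h).elim⟩
  choose z hz using hmin
  let y (x : A) : ι → A := z + Pi.single i₁ x + Pi.single i₂ (g - ∑ i ∈ s, z i - x)
  have hsum (x : A) : ∑ i ∈ s, y x i = g := by
    simp [y, Finset.sum_add_distrib, Finset.sum_pi_single', h₁, h₂]
  have hcoord (i : ι) (hi : i ∈ s) : ∑ x, F i (y x i) ≤ Fintype.card A • B i := by
    rcases eq_or_ne i i₁ with rfl | hi₁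
    · have hy (x : A) : y x i = z i + x := by simp [y, hne]
      simp_rw [hy]
      exact (Equiv.sum_comp (Equiv.addLeft (z i)) (F i)).trans_le (hF i hi)
    rcases eq_or_ne i i₂ with rfl | hi₂
    · have hy (x : A) : y x i = z i + (g - ∑ j ∈ s, z j) - x := by
        simp [y, hi₁, add_sub_assoc]
      simp_rw [hy]
      exact (Equiv.sum_comp (Equiv.subLeft _) (F i)).trans_le (hF i hi)
    · have hy (x : A) : y x i = z i := by simp [y, hi₁, hi₂]
      simp_rw [hy, Finset.sum_const]
      exact nsmul_le_nsmul_right (hz i hi) _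
  obtain ⟨x, hx⟩ : ∃ x, ∑ i ∈ s, F i (y x i) ≤ ∑ i ∈ s, B i := by
    refine exists_le_of_sum_le_card_nsmul ?_
    rw [Finset.sum_comm, Finset.smul_sum]
    exact Finset.sum_le_sum hcoord
  exact ⟨y x, hsum x, hx⟩

end Averaging

section FiniteCounting

theorem ncard_setOf_apply_eq_restrict {V A : Type*} [Finite V] (v₀ : V)
    (f : ({v // v ≠ v₀} → A) → A) :
    {c : V → A | c v₀ = f fun v => c v}.ncard = Nat.card A ^ Nat.card {v // v ≠ v₀} := by
  classical
  let restrict (c : V → A) : {v // v ≠ v₀} → A := fun v => c v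
  have hinj : Set.InjOn restrict {c | c v₀ = f (restrict c)} := by
    intro c (hc : c v₀ = _) c' (hc' : c' v₀ = _) h
    funext v
    by_cases hv : v = v₀
    · rw [hv, hc, hc', h]
    · exact congrFun h ⟨v, hv⟩
  have hsurj : restrict '' {c | c v₀ = f (restrict c)} = Set.univ := by
    refine Set.eq_univ_of_forall fun y => ?_
    let c (v : V) : A := if h : v = v₀ then f y else y ⟨v, h⟩
    have hc : restrict c = y := funext fun v => dif_neg v.2
    exact ⟨c, (dif_pos rfl).trans (congrArg f hc.symm), hc⟩
  rw [← hinj.ncard_image, hsurj, Set.ncard_univ, Nat.card_fun]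

theorem ncard_setOf_sum_eq {V A : Type*} [Fintype V] [AddCommGroup A] (v₀ : V) (t : A) :
    {c : V → A | ∑ v, c v = t}.ncard = Nat.card A ^ Nat.card {v // v ≠ v₀} := by
  classical
  rw [← ncard_setOf_apply_eq_restrict v₀ fun y => t - ∑ v, y v]
  simp_rw [Fintype.sum_eq_add_sum_subtype_ne _ v₀, eq_sub_iff_add_eq]

end FiniteCounting

section LinearAlgebra

theorem finrank_map_eq_finrank_map {R M M₂ M₃ : Type*} [Ring R] [AddCommGroup M] [Module R M]
    [AddCommGroup M₂] [Module R M₂] [AddCommGroup M₃] [Module R M₃] (f : M →ₗ[R] M₂)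
    (g : M →ₗ[R] M₃) (W : Submodule R M) (h : ∀ w ∈ W, f w = 0 ↔ g w = 0) :
    Module.finrank R (W.map f) = Module.finrank R (W.map g) := by
  have hker : LinearMap.ker (f.domRestrict W) = LinearMap.ker (g.domRestrict W) := by
    ext ⟨w, hw⟩
    exact h w hw
  rw [← LinearMap.range_domRestrict, ← LinearMap.range_domRestrict,
    ← (f.domRestrict W).quotKerEquivRange.finrank_eq,
    ← (g.domRestrict W).quotKerEquivRange.finrank_eq, hker]

theorem homogeneousSubmodule_eq_span_monomial (σ R : Type*) [CommSemiring R] (d : ℕ) :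
    homogeneousSubmodule σ R d =
      Submodule.span R ((fun s => monomial s (1 : R)) '' {s : σ →₀ ℕ | s.degree = d}) := by
  rw [homogeneousSubmodule_eq_finsupp_supported]
  exact AddMonoidAlgebra.supported_eq_span_single _ _

end LinearAlgebra

namespace Multigraph

variable {V E : Type} (G : Multigraph V E)

section VertexSum

variable [DecidableEq V]

theorem filter_incident_eq [Fintype V] (e : E) :
    ({v | G.Incident v e} : Finset V) = {G.fst e, G.snd e} := by
  ext v
  simp [Incident, eq_comm]

variable [Fintype E]

/-- The unsigned incidence map of `G`: the label of a vertex is the sum of the labels of the edges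
at that vertex. Applied to the exponents of a monomial in the edges, it gives the exponents of the
monomial in the vertices obtained by substituting `x v * x w` for an edge `{v, w}`. -/
def vertexSum {A : Type*} [AddCommMonoid A] (a : E → A) (v : V) : A :=
  ∑ e with G.Incident v e, a e

/-- The vertex labellings modulo `N` induced by the edge monomials of degree `d`. -/
def vertexSums (N d : ℕ) : Set (V → ZMod N) :=
  {c | ∃ a : E → ℕ, ∑ e, a e = d ∧ G.vertexSum (fun e => (a e : ZMod N)) = c}

variable [Fintype V]

theorem sum_vertexSum {A : Type*} [AddCommMonoid A] (a : E → A) :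
    ∑ v, G.vertexSum a v = 2 • ∑ e, a e := by
  simp_rw [vertexSum, Finset.sum_filter]
  rw [Finset.sum_comm, Finset.smul_sum]
  refine Finset.sum_congr rfl fun e _ => ?_
  rw [← Finset.sum_filter, filter_incident_eq, Finset.sum_pair (G.ne e), two_nsmul]

/-- The numerical condition `∑ v, c v = 2 * d` satisfied by all elements of `G.vertexSums N d`
is also sufficient. -/
def IsSaturated (N d : ℕ) : Prop :=
  ∀ c : V → ZMod N, ∑ v, c v = 2 * d → c ∈ G.vertexSums N d

variable {G}

theorem sum_eq_two_mul_of_mem_vertexSums {N d : ℕ} {c : V → ZMod N} (hc : c ∈ G.vertexSums N d) :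
    ∑ v, c v = 2 * d := by
  obtain ⟨a, rfl, rfl⟩ := hc
  rw [sum_vertexSum, ← Nat.cast_sum, nsmul_eq_mul, Nat.cast_two]

theorem IsSaturated.succ [Nonempty E] {N d : ℕ} (h : G.IsSaturated N d) :
    G.IsSaturated N (d + 1) := by
  classical
  intro c hc
  obtain ⟨e₀⟩ := ‹Nonempty E›
  let δ : E → ℕ := Pi.single e₀ 1
  have hδ : ∑ e, δ e = 1 := by simp [δ]
  obtain ⟨a, ha, hac⟩ := h (c - G.vertexSum fun e => (δ e : ZMod N)) (by
    simp only [Pi.sub_apply, Finset.sum_sub_distrib, hc, sum_vertexSum, ← Nat.cast_sum, hδ]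
    push_cast
    ring)
  refine ⟨a + δ, ?_, ?_⟩
  · simp only [Pi.add_apply, Finset.sum_add_distrib, ha, hδ]
  · rw [← eq_sub_iff_add_eq.mp hac]
    funext v
    simp [vertexSum, Finset.sum_add_distrib]

theorem IsSaturated.mono [Nonempty E] {N d d' : ℕ} (h : G.IsSaturated N d) (hd : d ≤ d') :
    G.IsSaturated N d' :=
  Nat.le_induction h (fun _ _ => IsSaturated.succ) d' hd

end VertexSum

section Characters

variable (K : Type) [Field K]

/-- The character of the torus `(Kˣ)^V` with exponents `c`, read modulo the order of `Kˣ`. -/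
noncomputable def character [Fintype V] (c : V → ZMod (Nat.card Kˣ)) : (V → Kˣ) →* K where
  toFun x := ∏ v, (x v : K) ^ (c v).val
  map_one' := by simp
  map_mul' x y := by simp [mul_pow, Finset.prod_mul_distrib]

theorem units_pow_val_natCast (u : Kˣ) (n : ℕ) :
    (u : K) ^ (n : ZMod (Nat.card Kˣ)).val = (u : K) ^ n := by
  rw [ZMod.val_natCast, ← Units.val_pow_eq_pow_val, pow_mod_natCard, Units.val_pow_eq_pow_val]

variable {K}

theorem character_vertexSum [Fintype V] [DecidableEq V] [Fintype E] (a : E → ℕ) (x : V → Kˣ) :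
    character K (G.vertexSum fun e => (a e : ZMod (Nat.card Kˣ))) x =
      ∏ e, G.point K x e ^ a e := by
  have hpow (v : V) : (x v : K) ^ (G.vertexSum (fun e => (a e : ZMod (Nat.card Kˣ))) v).val =
      ∏ e, if G.Incident v e then (x v : K) ^ a e else 1 := by
    rw [vertexSum, ← Nat.cast_sum, units_pow_val_natCast, ← Finset.prod_pow_eq_pow_sum,
      Finset.prod_filter]
  simp only [character, MonoidHom.coe_mk, OneHom.coe_mk, hpow]
  rw [Finset.prod_comm]
  refine Finset.prod_congr rfl fun e _ => ?_
  rw [← Finset.prod_filter, filter_incident_eq, Finset.prod_pair (G.ne e), point, mul_pow]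

variable (V K) in
theorem character_injective [Fintype V] [Finite K] :
    Function.Injective (character K : (V → ZMod (Nat.card Kˣ)) → (V → Kˣ) →* K) := by
  classical
  intro c c' h
  funext v
  obtain ⟨g, hg⟩ := IsCyclic.exists_ofOrder_eq_natCard (α := Kˣ)
  have hchar (c : V → ZMod (Nat.card Kˣ)) :
      character K c (Pi.mulSingle v g) = ((g ^ (c v).val : Kˣ) : K) := by
    refine (Fintype.prod_eq_single v fun w hw => ?_).trans (by simp)
    simp [hw]
  have hval : g ^ (c v).val = g ^ (c' v).val :=
    Units.ext <| by rw [← hchar, ← hchar, h]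
  have hlt (c : V → ZMod (Nat.card Kˣ)) : (c v).val < orderOf g :=
    (c v).val_lt.trans_eq hg.symm
  exact ZMod.val_injective _ <|
    pow_injOn_Iio_orderOf (hlt c) (hlt c') hval

end Characters

section HilbertFunction

variable (K : Type) [Field K]

/-- Evaluation of polynomials in the edges at all points of the affine toric set of `G`. -/
noncomputable def evalPoints : MvPolynomial E K →ₗ[K] ((V → Kˣ) → K) :=
  LinearMap.pi fun x => (aeval (G.point K x)).toLinearMap

variable {K}

theorem evalPoints_apply (f : MvPolynomial E K) (x : V → Kˣ) :
    G.evalPoints K f x = eval (G.point K x) f := by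
  simp [evalPoints, aeval_eq_eval]

theorem mem_vanishingIdeal_iff_of_isHomogeneous {f : MvPolynomial E K} {d : ℕ}
    (hf : f.IsHomogeneous d) : f ∈ G.vanishingIdeal K ↔ G.evalPoints K f = 0 := by
  have hcomp (n : ℕ) : homogeneousComponent n f = if n = d then f else 0 :=
    homogeneousComponent_of_mem hf
  simp only [funext_iff, evalPoints_apply, Pi.zero_apply]
  refine ⟨fun h x => by simpa [hcomp] using h x d, fun h x n => ?_⟩
  rw [hcomp]
  split_ifs
  exacts [h x, map_zero _]

variable [Fintype V] [DecidableEq V] [Fintype E]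

theorem evalPoints_monomial (s : E →₀ ℕ) :
    G.evalPoints K (monomial s 1) =
      character K (G.vertexSum fun e => (s e : ZMod (Nat.card Kˣ))) := by
  funext x
  rw [character_vertexSum, evalPoints_apply, eval_monomial, one_mul,
    Finsupp.prod_fintype _ _ fun _ => pow_zero _]

theorem map_evalPoints_homogeneousSubmodule (d : ℕ) :
    (homogeneousSubmodule E K d).map (G.evalPoints K) =
      Submodule.span K ((fun c => ⇑(character K c)) '' G.vertexSums (Nat.card Kˣ) d) := by
  rw [homogeneousSubmodule_eq_span_monomial, Submodule.map_span, Set.image_image]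
  simp_rw [evalPoints_monomial]
  congr 1
  ext φ
  constructor
  · rintro ⟨s, hs, rfl⟩
    exact ⟨_, ⟨s, (Finsupp.degree_eq_sum s).symm.trans hs, rfl⟩, rfl⟩
  · rintro ⟨_, ⟨a, ha, rfl⟩, rfl⟩
    exact ⟨Finsupp.equivFunOnFinite.symm a, (Finsupp.degree_eq_sum _).trans ha, rfl⟩

end HilbertFunction

theorem hilbert_eq_ncard_vertexSums [Finite V] [DecidableEq V] [Fintype E] (K : Type) [Field K]
    [Finite K] (d : ℕ) : G.hilbert K d = (G.vertexSums (Nat.card Kˣ) d).ncard := by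
  have := Fintype.ofFinite V
  have := Fintype.ofFinite (G.vertexSums (Nat.card Kˣ) d)
  have hindep : LinearIndependent K
      fun c : G.vertexSums (Nat.card Kˣ) d => (character K c.1 : (V → Kˣ) → K) :=
    (linearIndependent_monoidHom (V → Kˣ) K).comp _
      ((character_injective V K).comp Subtype.val_injective)
  have hker (f : MvPolynomial E K) (hf : f ∈ homogeneousSubmodule E K d) :
      (Ideal.Quotient.mkₐ K (G.vanishingIdeal K)).toLinearMap f = 0 ↔ G.evalPoints K f = 0 := by
    rw [← G.mem_vanishingIdeal_iff_of_isHomogeneous hf]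
    exact Ideal.Quotient.eq_zero_iff_mem
  rw [hilbert, finrank_map_eq_finrank_map _ (G.evalPoints K) _ hker,
    map_evalPoints_homogeneousSubmodule, Set.image_eq_range, finrank_span_eq_card hindep,
    ← Nat.card_eq_fintype_card, Nat.card_coe_set_eq]

section Regularity

/-- Edge products with values in `M` determine a vertex labelling up to a common factor: a labelling
with constant edge products is itself constant. For connected `G` with at least one edge and
nontrivial `M`, this expresses that `G` is not bipartite. -/
def IsRigid (M : Type*) [CommGroup M] : Prop :=
  ∀ (z : V → M) (u : M), (∀ e, z (G.fst e) * z (G.snd e) = u) → ∀ v w, z v = z w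

variable {G} {K : Type} [Field K]

theorem orbit_point_smul (u : Kˣ) (x : V → Kˣ) :
    MulAction.orbit Kˣ (G.point K (u • x)) = MulAction.orbit Kˣ (G.point K x) := by
  refine MulAction.orbit_eq_iff.mpr ⟨u * u, funext fun e => ?_⟩
  simp only [point, Pi.smul_apply, Units.smul_def, smul_eq_mul, Units.val_mul]
  ring

theorem IsRigid.eq_of_orbit_point_eq (hG : G.IsRigid Kˣ) {x y : V → Kˣ} {v₀ : V}
    (hv₀ : x v₀ = y v₀)
    (h : MulAction.orbit Kˣ (G.point K x) = MulAction.orbit Kˣ (G.point K y)) : x = y := by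
  obtain ⟨u, hu⟩ := MulAction.orbit_eq_iff.mp h
  have hprod (e : E) : u * (y (G.fst e) * y (G.snd e)) = x (G.fst e) * x (G.snd e) :=
    Units.ext (congrFun hu e)
  have hconst := hG (x / y) u fun e => by
    rw [Pi.div_apply, Pi.div_apply, div_mul_div_comm, ← hprod, mul_div_cancel_right]
  funext v
  rw [← div_eq_one, ← Pi.div_apply, hconst v v₀, Pi.div_apply, hv₀, div_self']

theorem IsRigid.ncard_toricSet [Finite V] (hG : G.IsRigid Kˣ) (v₀ : V) :
    (G.toricSet K).ncard = Nat.card Kˣ ^ Nat.card {v // v ≠ v₀} := by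
  have hslice : G.toricSet K =
      (fun x => MulAction.orbit Kˣ (G.point K x)) '' {x : V → Kˣ | x v₀ = 1} := by
    refine Set.Subset.antisymm ?_ (Set.image_subset_range _ _)
    rintro _ ⟨x, rfl⟩
    exact ⟨(x v₀)⁻¹ • x, inv_mul_cancel _, orbit_point_smul _ x⟩
  have hinj : Set.InjOn (fun x => MulAction.orbit Kˣ (G.point K x)) {x : V → Kˣ | x v₀ = 1} :=
    fun x hx y hy hxy => hG.eq_of_orbit_point_eq (hx.trans hy.symm) hxy
  rw [hslice, hinj.ncard_image]
  exact ncard_setOf_apply_eq_restrict v₀ fun _ => 1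

variable [Fintype V] [DecidableEq V] [Nonempty V] [Fintype E] [Finite K]

theorem IsRigid.hilbert_eq_ncard_toricSet_iff (hG : G.IsRigid Kˣ) (d : ℕ) :
    G.hilbert K d = (G.toricSet K).ncard ↔ G.IsSaturated (Nat.card Kˣ) d := by
  let T : Set (V → ZMod (Nat.card Kˣ)) := {c | ∑ v, c v = 2 * d}
  have hsub : G.vertexSums (Nat.card Kˣ) d ⊆ T := fun _ => sum_eq_two_mul_of_mem_vertexSums
  have hT : (G.toricSet K).ncard = T.ncard := by
    obtain ⟨v₀⟩ := ‹Nonempty V›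
    rw [hG.ncard_toricSet v₀, ncard_setOf_sum_eq v₀, Nat.card_zmod]
  rw [hilbert_eq_ncard_vertexSums, hT]
  exact ⟨fun h => (Set.eq_of_subset_of_ncard_le hsub h.ge).ge,
    fun h => congrArg Set.ncard (hsub.antisymm h)⟩

theorem IsRigid.reg_eq (hG : G.IsRigid Kˣ) {d : ℕ} (hd : G.IsSaturated (Nat.card Kˣ) d)
    (hlt : ∀ d' < d, ¬ G.IsSaturated (Nat.card Kˣ) d') : G.reg K = d := by
  simp_rw [reg, hG.hilbert_eq_ncard_toricSet_iff]
  exact IsLeast.csInf_eq ⟨hd, fun d' hd' => not_lt.mp fun h => hlt d' h hd'⟩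

end Regularity

end Multigraph

section PairSums

variable {A : Type*} [AddCommMonoid A] {n : ℕ} {f c : ℕ → A}

theorem sum_range_of_even_of_add_eq (hn : Even n)
    (h : ∀ j, j + 1 < n → f j + f (j + 1) = c (j + 1)) :
    ∑ j ∈ Finset.range n, f j = ∑ l ∈ Finset.range (n / 2), c (2 * l + 1) := by
  obtain ⟨t, rfl⟩ := hn
  rw [← two_mul] at h ⊢
  rw [Nat.mul_div_cancel_left t two_pos]
  induction t with
  | zero => simp
  | succ t ih =>
    rw [show 2 * (t + 1) = 2 * t + 1 + 1 by ring, Finset.sum_range_succ, Finset.sum_range_succ,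
      ih fun j hj => h j (by omega), add_assoc, h (2 * t) (by omega), Finset.sum_range_succ]

theorem sum_range_of_odd_of_add_eq (hn : Odd n)
    (h : ∀ j, j + 1 < n → f j + f (j + 1) = c (j + 1)) :
    ∑ j ∈ Finset.range n, f j = f 0 + ∑ l ∈ Finset.range (n / 2), c (2 * l + 2) := by
  obtain ⟨t, rfl⟩ := hn
  rw [Finset.sum_range_succ', add_comm, show (2 * t + 1) / 2 = 2 * t / 2 by omega,
    sum_range_of_even_of_add_eq (c := fun j => c (j + 1)) (even_two_mul t)
      fun j hj => h (j + 1) (by omega)]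

end PairSums

section PathLabel

/-- The edge labels along a path, with first label `s`, such that the two edges meeting at the
`j`-th interior vertex have labels summing to `c j`; `c 0` is never read. -/
def pathLabel {A : Type*} [AddCommGroup A] (c : ℕ → A) (s : A) : ℕ → A
  | 0 => s
  | j + 1 => c (j + 1) - pathLabel c s j

variable {A : Type*} [AddCommGroup A] (c : ℕ → A)

theorem pathLabel_add_pathLabel_succ (s : A) (j : ℕ) :
    pathLabel c s j + pathLabel c s (j + 1) = c (j + 1) :=
  add_sub_cancel _ _

theorem pathLabel_bijective (j : ℕ) : Function.Bijective fun s => pathLabel c s j := by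
  induction j with
  | zero => exact Function.bijective_id
  | succ j ih => exact (Equiv.subLeft (c (j + 1))).bijective.comp ih

theorem sum_sum_val_pathLabel_of_even {N : ℕ} [NeZero N] (c : ℕ → ZMod N) {n : ℕ} (hn : Even n) :
    ∑ s, ∑ j ∈ Finset.range n, (pathLabel c s j).val = N * (n / 2 * (N - 1)) := by
  have hcomp (j : ℕ) : ∑ s, (pathLabel c s j).val = ∑ x : ZMod N, x.val :=
    (pathLabel_bijective c j).sum_comp ZMod.val
  obtain ⟨t, rfl⟩ := hn
  calc ∑ s, ∑ j ∈ Finset.range (t + t), (pathLabel c s j).val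
    _ = t * ((∑ x : ZMod N, x.val) * 2) := by
      rw [Finset.sum_comm]
      simp only [hcomp, Finset.sum_const, Finset.card_range, smul_eq_mul]
      ring
    _ = N * ((t + t) / 2 * (N - 1)) := by
      rw [sum_zmod_val_mul_two, ← two_mul, Nat.mul_div_cancel_left t two_pos]
      ring

end PathLabel

section ParallelComposition

variable {ι : Type} (k : ι → ℕ)

theorem pcVert_zero (i : ι) : pcVert k i 0 = Sum.inl false := by
  simp [pcVert]

variable {k}

theorem pcVert_length {i : ι} (hi : 0 < k i) : pcVert k i (k i) = Sum.inl true := by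
  simp [pcVert, hi.ne']

theorem pcVert_succ (i : ι) (j : Fin (k i - 1)) : pcVert k i (j + 1) = Sum.inr ⟨i, j⟩ := by
  simp [pcVert, show (j : ℕ) + 1 < k i by omega]

theorem pcVert_eq_inl_false_iff {i : ι} {j : ℕ} : pcVert k i j = Sum.inl false ↔ j = 0 := by
  unfold pcVert
  split_ifs <;> simp_all

theorem pcVert_eq_inr_iff {i i' : ι} {j : Fin (k i - 1)} {j' : ℕ} :
    pcVert k i' j' = Sum.inr ⟨i, j⟩ ↔ i' = i ∧ j' = j + 1 := by
  refine ⟨fun h => ?_, fun ⟨hi, hj⟩ => by rw [hi, hj, pcVert_succ]⟩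
  unfold pcVert at h
  split_ifs at h with h₀ hlt
  obtain ⟨rfl, hj⟩ := Sigma.mk.inj (Sum.inr.inj h)
  exact ⟨rfl, by rw [← eq_of_heq hj]; exact (Nat.succ_pred h₀).symm⟩

theorem exists_pcVert_eq {i₀ : ι} (hi₀ : 0 < k i₀) (v : Bool ⊕ ((i : ι) × Fin (k i - 1))) :
    ∃ i j, j ≤ k i ∧ pcVert k i j = v := by
  rcases v with (_ | _) | ⟨i, j⟩
  · exact ⟨i₀, 0, Nat.zero_le _, pcVert_zero k i₀⟩
  · exact ⟨i₀, k i₀, le_rfl, pcVert_length hi₀⟩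
  · exact ⟨i, j + 1, by omega, pcVert_succ i j⟩

theorem apply_pcVert_eq_ite {M : Type*} [CommGroup M]
    {z : Bool ⊕ ((i : ι) × Fin (k i - 1)) → M} {u : M}
    (hz : ∀ e, z ((parallelComp k).fst e) * z ((parallelComp k).snd e) = u) {i : ι} {j : ℕ}
    (hj : j ≤ k i) :
    z (pcVert k i j) = if Even j then z (Sum.inl false) else u / z (Sum.inl false) := by
  induction j with
  | zero => simp [pcVert_zero]
  | succ j ih =>
    have hstep : z (pcVert k i (j + 1)) = u / z (pcVert k i j) :=
      eq_div_of_mul_eq'' (hz ⟨i, ⟨j, hj⟩⟩)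
    rw [hstep, ih (by omega)]
    by_cases hj : Even j <;> simp [hj, Nat.even_add_one]

theorem isRigid_parallelComp (M : Type*) [CommGroup M] {i₀ i₁ : ι} (h₀ : Odd (k i₀))
    (h₁ : Even (k i₁)) (hpos : 0 < k i₁) : (parallelComp k).IsRigid M := by
  intro z u hz
  have hodd : z (Sum.inl true) = u / z (Sum.inl false) := by
    rw [← pcVert_length h₀.pos, apply_pcVert_eq_ite hz le_rfl, if_neg (Nat.not_even_iff_odd.mpr h₀)]
  have heven : z (Sum.inl true) = z (Sum.inl false) := by
    rw [← pcVert_length hpos, apply_pcVert_eq_ite hz le_rfl, if_pos h₁]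
  have hconst (v) : z v = z (Sum.inl false) := by
    obtain ⟨i, j, hj, rfl⟩ := exists_pcVert_eq hpos v
    rw [apply_pcVert_eq_ite hz hj, ← hodd, heven, ite_self]
  exact fun v w => (hconst v).trans (hconst w).symm

variable (k) in
theorem exists_eq_edgeFamily {A : Type*} [Zero A] (a : (i : ι) × Fin (k i) → A) :
    ∃ L : ι → ℕ → A, a = fun e => L e.1 e.2 :=
  ⟨fun i j => if hj : j < k i then a ⟨i, ⟨j, hj⟩⟩ else 0, by simp⟩

variable [Fintype ι]

variable (k) in
theorem sum_edges_eq {A : Type*} [AddCommMonoid A] (L : ι → ℕ → A) :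
    ∑ e : (i : ι) × Fin (k i), L e.1 e.2 = ∑ i, ∑ j ∈ Finset.range (k i), L i j := by
  simp_rw [Fintype.sum_sigma, ← Fin.sum_univ_eq_sum_range]

variable [DecidableEq ι] {A : Type*}

theorem vertexSum_parallelComp_inr [AddCommMonoid A] (L : ι → ℕ → A) (i : ι)
    (j : Fin (k i - 1)) :
    (parallelComp k).vertexSum (fun e => L e.1 e.2) (Sum.inr ⟨i, j⟩) = L i j + L i (j + 1) := by
  let e₁ : (i : ι) × Fin (k i) := ⟨i, ⟨j, by omega⟩⟩
  let e₂ : (i : ι) × Fin (k i) := ⟨i, ⟨j + 1, by omega⟩⟩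
  have hedges : ({e | (parallelComp k).Incident (Sum.inr ⟨i, j⟩) e} : Finset _) = {e₁, e₂} := by
    ext ⟨i', j'⟩
    simp only [Multigraph.Incident, parallelComp, pcVert_eq_inr_iff, Finset.mem_filter_univ,
      Finset.mem_insert, Finset.mem_singleton, e₁, e₂, Sigma.mk.injEq]
    constructor
    · rintro (⟨rfl, h⟩ | ⟨rfl, h⟩)
      · exact .inr ⟨rfl, heq_of_eq (Fin.ext h)⟩
      · exact .inl ⟨rfl, heq_of_eq (Fin.ext (Nat.succ.inj h))⟩
    · rintro (⟨rfl, h⟩ | ⟨rfl, h⟩) <;> simp [eq_of_heq h]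
  have hne : e₁ ≠ e₂ := by simp [e₁, e₂]
  rw [Multigraph.vertexSum, hedges, Finset.sum_pair hne]

theorem vertexSum_parallelComp_inl_false [AddCommMonoid A] (hk : ∀ i, 0 < k i) (L : ι → ℕ → A) :
    (parallelComp k).vertexSum (fun e => L e.1 e.2) (Sum.inl false) = ∑ i, L i 0 := by
  have hedge (i : ι) (j : Fin (k i)) :
      (parallelComp k).Incident (Sum.inl false) ⟨i, j⟩ ↔ j = ⟨0, hk i⟩ := by
    simp [Multigraph.Incident, parallelComp, pcVert_eq_inl_false_iff, Fin.ext_iff]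
  simp_rw [Multigraph.vertexSum, Finset.sum_filter, Fintype.sum_sigma, hedge]
  exact Finset.sum_congr rfl fun i _ => Fintype.sum_ite_eq' _ fun j : Fin (k i) => L i j

/-- The remaining equation, at the common terminal vertex, follows by comparing total sums. -/
theorem vertexSum_parallelComp_eq [AddCommGroup A] (hk : ∀ i, 0 < k i) {L : ι → ℕ → A}
    {c : Bool ⊕ ((i : ι) × Fin (k i - 1)) → A} (hstart : ∑ i, L i 0 = c (Sum.inl false))
    (hinterior : ∀ i j, j + 1 < k i → L i j + L i (j + 1) = c (pcVert k i (j + 1)))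
    (hsum : ∑ v, c v = 2 • ∑ i, ∑ j ∈ Finset.range (k i), L i j) :
    (parallelComp k).vertexSum (fun e => L e.1 e.2) = c := by
  have hfalse := (vertexSum_parallelComp_inl_false hk L).trans hstart
  have hinr (p) : (parallelComp k).vertexSum (fun e => L e.1 e.2) (Sum.inr p) = c (Sum.inr p) := by
    rw [vertexSum_parallelComp_inr, hinterior _ _ (by omega), pcVert_succ]
  have htotal := ((parallelComp k).sum_vertexSum fun e => L e.1 e.2).trans <|
    (congrArg (2 • ·) (sum_edges_eq k L)).trans hsum.symm
  simp only [Fintype.sum_sum_type, Fintype.sum_bool, hfalse, hinr, add_left_inj] at htotal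
  funext v
  rcases v with (_ | _) | p
  exacts [hfalse, htotal, hinr p]

end ParallelComposition

section OneOddPath

variable {ι : Type} [Fintype ι] [DecidableEq ι] {k : ι → ℕ} {i₀ : ι}

theorem sum_sum_range_of_add_eq {A : Type*} [AddCommMonoid A] {L c : ι → ℕ → A}
    (h₀ : Odd (k i₀)) (he : ∀ i, i ≠ i₀ → Even (k i))
    (h : ∀ i j, j + 1 < k i → L i j + L i (j + 1) = c i (j + 1)) :
    ∑ i, ∑ j ∈ Finset.range (k i), L i j =
      L i₀ 0 + (∑ l ∈ Finset.range (k i₀ / 2), c i₀ (2 * l + 2) +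
        ∑ i ∈ Finset.univ.erase i₀, ∑ l ∈ Finset.range (k i / 2), c i (2 * l + 1)) := by
  rw [← Finset.add_sum_erase _ _ (Finset.mem_univ i₀), sum_range_of_odd_of_add_eq h₀ (h i₀),
    add_assoc]
  congr 2
  exact Finset.sum_congr rfl fun i hi =>
    sum_range_of_even_of_add_eq (he i (Finset.ne_of_mem_erase hi)) (h i)

section UpperBound

variable {N : ℕ} [NeZero N]

theorem exists_sum_eq_and_sum_val_pathLabel_le (he : ∀ i, i ≠ i₀ → Even (k i))
    (hι : (Finset.univ.erase i₀).Nontrivial) (c : ι → ℕ → ZMod N) (g s₀ : ZMod N) :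
    ∃ s : ι → ZMod N, s i₀ = s₀ ∧ ∑ i, s i = g ∧
      ∑ i, ∑ j ∈ Finset.range (k i), (pathLabel (c i) (s i) j).val ≤
        (k i₀ + ∑ i ∈ Finset.univ.erase i₀, k i / 2) * (N - 1) := by
  let cost (i : ι) (x : ZMod N) : ℕ := ∑ j ∈ Finset.range (k i), (pathLabel (c i) x j).val
  have hcost_mean (i : ι) (hi : i ∈ Finset.univ.erase i₀) :
      ∑ x, cost i x ≤ Fintype.card (ZMod N) • (k i / 2 * (N - 1)) := by
    rw [sum_sum_val_pathLabel_of_even _ (he i (Finset.ne_of_mem_erase hi)), ZMod.card, smul_eq_mul]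
  have hcost_le (x : ZMod N) : cost i₀ x ≤ k i₀ * (N - 1) := by
    refine (Finset.sum_le_card_nsmul _ _ (N - 1) fun j _ => ?_).trans_eq (by simp)
    exact Nat.le_sub_one_of_lt (ZMod.val_lt _)
  obtain ⟨y, hsum, hle⟩ := exists_sum_eq_and_sum_apply_le hι cost _ hcost_mean (g - s₀)
  let s := Function.update y i₀ s₀
  have hs₀ : s i₀ = s₀ := Function.update_self ..
  have hs (i : ι) (hi : i ∈ Finset.univ.erase i₀) : s i = y i :=
    Function.update_of_ne (Finset.ne_of_mem_erase hi) ..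
  refine ⟨s, hs₀, ?_, ?_⟩
  · rw [← Finset.add_sum_erase _ _ (Finset.mem_univ i₀), Finset.sum_congr rfl hs, hs₀, hsum,
      add_sub_cancel]
  · change ∑ i, cost i (s i) ≤ _
    rw [← Finset.add_sum_erase _ _ (Finset.mem_univ i₀), add_mul, Finset.sum_mul,
      Finset.sum_congr rfl fun i hi => congrArg (cost i) (hs i hi)]
    exact add_le_add (hcost_le _) hle

theorem isSaturated_parallelComp (hk : ∀ i, 0 < k i) (h₀ : Odd (k i₀))
    (he : ∀ i, i ≠ i₀ → Even (k i)) (hι : (Finset.univ.erase i₀).Nontrivial) :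
    (parallelComp k).IsSaturated N
      ((k i₀ + ∑ i ∈ Finset.univ.erase i₀, k i / 2 - 1) * (N - 1)) := by
  intro c hc
  set d := (k i₀ + ∑ i ∈ Finset.univ.erase i₀, k i / 2 - 1) * (N - 1) with hd
  let C (i : ι) (j : ℕ) : ZMod N := c (pcVert k i j)
  let T := ∑ l ∈ Finset.range (k i₀ / 2), C i₀ (2 * l + 2) +
    ∑ i ∈ Finset.univ.erase i₀, ∑ l ∈ Finset.range (k i / 2), C i (2 * l + 1)
  obtain ⟨s, hs₀, hstart, hle⟩ :=
    exists_sum_eq_and_sum_val_pathLabel_le he hι C (c (Sum.inl false)) (d - T)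
  let L (i : ι) : ℕ → ZMod N := pathLabel (C i) (s i)
  have hstep (i : ι) (j : ℕ) : L i j + L i (j + 1) = C i (j + 1) :=
    pathLabel_add_pathLabel_succ ..
  have htotal : ∑ i, ∑ j ∈ Finset.range (k i), L i j = d := by
    rw [sum_sum_range_of_add_eq h₀ he fun i j _ => hstep i j]
    exact add_eq_of_eq_sub hs₀
  have hval_le : ∑ i, ∑ j ∈ Finset.range (k i), (L i j).val ≤ d := by
    refine Nat.ModEq.le_of_lt_add (m := N) ?_ ?_
    · rw [← ZMod.natCast_eq_natCast_iff, ← htotal]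
      simp
    · have hd' : (k i₀ + ∑ i ∈ Finset.univ.erase i₀, k i / 2) * (N - 1) = d + (N - 1) := by
        rw [hd, ← Nat.succ_mul, Nat.succ_eq_add_one, Nat.sub_add_cancel (by have := hk i₀; omega)]
      rw [hd'] at hle
      exact hle.trans_lt (Nat.add_lt_add_left (Nat.sub_one_lt (NeZero.ne N)) d)
  have : Nonempty ((i : ι) × Fin (k i)) := ⟨i₀, 0, hk i₀⟩
  obtain ⟨a, ha, hab⟩ := exists_natCast_eq_and_sum_eq (fun e : (i : ι) × Fin (k i) => L e.1 e.2)
    ((sum_edges_eq k L).trans htotal) ((sum_edges_eq k fun i j => (L i j).val).trans_le hval_le)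
  refine ⟨a, ha, ?_⟩
  simp_rw [hab]
  refine vertexSum_parallelComp_eq hk hstart (fun i j _ => hstep i j) ?_
  rw [hc, htotal, nsmul_eq_mul, Nat.cast_two]

end UpperBound

section LowerBound

variable {N : ℕ}

theorem mul_le_sum_range_of_even {n B : ℕ} {f : ℕ → ℕ} (hn : Even n)
    (h : ∀ j, j + 1 < n → B ≤ f j + f (j + 1)) : n / 2 * B ≤ ∑ j ∈ Finset.range n, f j := by
  rw [sum_range_of_even_of_add_eq (f := f) (c := fun j => f (j - 1) + f j) hn fun _ _ => rfl]
  refine Eq.trans_le (by simp) (Finset.card_nsmul_le_sum (Finset.range (n / 2)) _ B ?_)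
  exact fun l hl => h (2 * l) (by have := Finset.mem_range.mp hl; omega)

theorem eq_neg_one_of_add_eq_neg_two {R : Type*} [Ring R] {n : ℕ} {f : ℕ → R} (hf₀ : f 0 = -1)
    (h : ∀ j, j + 1 < n → f j + f (j + 1) = -2) {j : ℕ} (hj : j < n) : f j = -1 := by
  induction j with
  | zero => exact hf₀
  | succ j ih =>
    rw [eq_sub_of_add_eq' (h j hj), ih (by omega)]
    norm_num

theorem apply_zero_eq_neg_one_of_sum_eq {R : Type*} [CommRing R] {L : ι → ℕ → R}
    (h₀ : Odd (k i₀)) (he : ∀ i, i ≠ i₀ → Even (k i))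
    (hL : ∀ i j, j + 1 < k i → L i j + L i (j + 1) = if i = i₀ then -2 else -1)
    (hsum : ∑ i, ∑ j ∈ Finset.range (k i), L i j =
      -(k i₀ + ∑ i ∈ Finset.univ.erase i₀, k i / 2 : ℕ)) :
    L i₀ 0 = -1 := by
  have hrest : ∑ i ∈ Finset.univ.erase i₀, ∑ l ∈ Finset.range (k i / 2),
      (if i = i₀ then -2 else -1 : R) = -(∑ i ∈ Finset.univ.erase i₀, k i / 2 : ℕ) := by
    rw [Nat.cast_sum, ← Finset.sum_neg_distrib]
    exact Finset.sum_congr rfl fun i hi => by simp [Finset.ne_of_mem_erase hi]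
  have hk₀ : (k i₀ : R) = 2 * (k i₀ / 2 : ℕ) + 1 := by
    simpa using congrArg (Nat.cast (R := R)) (Nat.two_mul_div_two_add_one_of_odd h₀).symm
  rw [sum_sum_range_of_add_eq (c := fun i _ => if i = i₀ then -2 else -1) h₀ he hL, hrest,
    if_pos rfl, Finset.sum_const, Finset.card_range, nsmul_eq_mul, Nat.cast_add, hk₀] at hsum
  linear_combination hsum

theorem exists_edgeFamily_of_isSaturated {d : ℕ} (h : (parallelComp k).IsSaturated N d)
    (w : ι → ℕ → ZMod N) :
    ∃ L : ι → ℕ → ℕ, ∑ i, ∑ j ∈ Finset.range (k i), L i j = d ∧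
      ∀ i j, j + 1 < k i → (L i j + L i (j + 1) : ZMod N) = w i (j + 1) := by
  let inner (p : (i : ι) × Fin (k i - 1)) : ZMod N := w p.1 (p.2 + 1)
  let outer (b : Bool) : ZMod N := if b then 2 * d - ∑ p, inner p else 0
  obtain ⟨a, ha, hac⟩ := h (Sum.elim outer inner) (by simp [outer])
  obtain ⟨L, rfl⟩ := exists_eq_edgeFamily k a
  refine ⟨L, (sum_edges_eq k L).symm.trans ha, fun i j hj => ?_⟩
  exact (vertexSum_parallelComp_inr (fun i j => (L i j : ZMod N)) i ⟨j, by omega⟩).symm.trans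
    (congrFun hac _)

theorem mul_sub_one_le_of_isSaturated (h₀ : Odd (k i₀)) (he : ∀ i, i ≠ i₀ → Even (k i)) {d : ℕ}
    (hd : (d : ZMod N) = -(k i₀ + ∑ i ∈ Finset.univ.erase i₀, k i / 2 : ℕ))
    (h : (parallelComp k).IsSaturated N d) :
    (k i₀ + ∑ i ∈ Finset.univ.erase i₀, k i / 2) * (N - 1) ≤ d := by
  obtain ⟨L, rfl, hL⟩ := exists_edgeFamily_of_isSaturated h fun i _ => if i = i₀ then -2 else -1
  have hstep_odd (j : ℕ) (hj : j + 1 < k i₀) : (L i₀ j + L i₀ (j + 1) : ZMod N) = -2 := by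
    rw [hL i₀ j hj, if_pos rfl]
  have hstep_even (i : ι) (hi : i ≠ i₀) (j : ℕ) (hj : j + 1 < k i) :
      ((L i j + L i (j + 1) : ℕ) : ZMod N) = -1 := by
    rw [Nat.cast_add, hL i j hj, if_neg hi]
  have hfirst : (L i₀ 0 : ZMod N) = -1 :=
    apply_zero_eq_neg_one_of_sum_eq (L := fun i j => (L i j : ZMod N)) h₀ he hL <| by
      rw [← hd, Nat.cast_sum]
      simp_rw [Nat.cast_sum]
  have hodd : k i₀ * (N - 1) ≤ ∑ j ∈ Finset.range (k i₀), L i₀ j := by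
    refine Eq.trans_le (by simp) (Finset.card_nsmul_le_sum (Finset.range (k i₀)) _ (N - 1) ?_)
    exact fun j hj => sub_one_le_of_natCast_eq_neg_one <|
      eq_neg_one_of_add_eq_neg_two (f := fun j => (L i₀ j : ZMod N)) hfirst hstep_odd
        (Finset.mem_range.mp hj)
  have heven (i : ι) (hi : i ∈ Finset.univ.erase i₀) :
      k i / 2 * (N - 1) ≤ ∑ j ∈ Finset.range (k i), L i j := by
    have hi := Finset.ne_of_mem_erase hi
    exact mul_le_sum_range_of_even (he i hi) fun j hj =>
      sub_one_le_of_natCast_eq_neg_one (hstep_even i hi j hj)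
  rw [← Finset.add_sum_erase _ _ (Finset.mem_univ i₀), add_mul, Finset.sum_mul]
  exact add_le_add hodd (Finset.sum_le_sum heven)

theorem not_isSaturated_parallelComp [NeZero N] (h₀ : Odd (k i₀))
    (he : ∀ i, i ≠ i₀ → Even (k i)) {d : ℕ}
    (hd : d < (k i₀ + ∑ i ∈ Finset.univ.erase i₀, k i / 2 - 1) * (N - 1)) :
    ¬ (parallelComp k).IsSaturated N d := by
  intro h
  have : Nonempty ((i : ι) × Fin (k i)) := ⟨i₀, 0, h₀.pos⟩
  obtain ⟨P, hP⟩ : ∃ P, k i₀ + ∑ i ∈ Finset.univ.erase i₀, k i / 2 = P + 1 :=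
    Nat.exists_eq_add_of_le' (by have := h₀.pos; omega)
  rw [hP, Nat.add_sub_cancel] at hd
  have hcast : ((P * (N - 1) - 1 : ℕ) : ZMod N) =
      -(k i₀ + ∑ i ∈ Finset.univ.erase i₀, k i / 2 : ℕ) := by
    rw [Nat.cast_sub (by omega), hP, Nat.cast_mul, natCast_sub_one_eq_neg_one]
    push_cast
    ring
  have hle := mul_sub_one_le_of_isSaturated h₀ he hcast (h.mono (Nat.le_sub_one_of_lt hd))
  rw [hP, Nat.succ_mul] at hle
  omega

end LowerBound

theorem reg_parallelComp_one_odd_rest_even_general (K : Type) [Field K] [Finite K]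
    (hι : 2 < Fintype.card ι) (hk : ∀ i, 0 < k i) (h₀ : Odd (k i₀))
    (he : ∀ i, i ≠ i₀ → Even (k i)) :
    (parallelComp k).reg K =
      (k i₀ + ∑ i ∈ Finset.univ.erase i₀, k i / 2 - 1) * (Nat.card K - 2) := by
  have hrest : (Finset.univ.erase i₀).Nontrivial := by
    rw [← Finset.one_lt_card_iff_nontrivial, Finset.card_erase_of_mem (Finset.mem_univ i₀),
      Finset.card_univ]
    omega
  obtain ⟨i₁, hi₁⟩ := hrest.nonempty
  have hrigid := isRigid_parallelComp Kˣ h₀ (he i₁ (Finset.ne_of_mem_erase hi₁)) (hk i₁)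
  rw [show Nat.card K - 2 = Nat.card Kˣ - 1 by rw [Nat.card_units]; rfl]
  exact hrigid.reg_eq (isSaturated_parallelComp hk h₀ he hrest)
    fun _ => not_isSaturated_parallelComp h₀ he

end OneOddPath

/-- **Table 2, case `l = 1, r > 2`.**  Let `G` be the parallel composition of `r > 2`
paths, the first of odd length and all the others of even length.  Then
`reg G = (k 0 + k 1/2 + ... + k (r-1)/2 - 1)(q-2)`, where `q = |K|`. -/
theorem reg_parallelComp_one_odd_rest_even
    (K : Type) [Field K] [Fintype K] (m : ℕ) (hm : 2 ≤ m)
    (k : Fin (m + 1) → ℕ) (hk : ∀ i, 0 < k i)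
    (h0 : Odd (k 0)) (he : ∀ i, i ≠ 0 → Even (k i)) :
    (parallelComp k).reg K =
      (k 0 + (∑ i ∈ Finset.univ.erase 0, k i / 2) - 1) * (Fintype.card K - 2) := by
  rw [reg_parallelComp_one_odd_rest_even_general K (by simpa using hm) hk h0 he,
    Nat.card_eq_fintype_card]
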